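/- arXiv:2107.14625 — 5 statements merged into one kernel-verified Lean document; each statement's English description precedes it below -/
import Mathlib

section
/- For every observation parameter θ' ∈ ℝ^m, the SLMF Stackelberg security game with misperception 𝓗²(θ') admits a Misperception Strong Stackelberg Equilibrium: a pair (x*, y*) with x* ∈ Ω_l and y* ∈ BR(x*, θ') such that U_l(x*, y*) ≥ U_l(x, y) for every x ∈ Ω_l and every y ∈ BR(x, θ'). -/
open scoped BigOperators

noncomputable section

/-- Simplex-type strategy set with total resource `r` over `K` targets. -/
def stratSet {K : ℕ} (r : ℝ) : Set (Fin K → ℝ) :=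
  {x | ∑ k, x k = r ∧ ∀ k, 0 ≤ x k}

/-- Leader's utility. -/
def Ul {n K : ℕ} (Rl : ℝ) (Ulc Ulu : Fin K → ℝ)
    (x : Fin K → ℝ) (y : Fin n → Fin K → ℝ) : ℝ :=
  ∑ k, (∑ i, y i k) * (x k * Ulc k + (Rl - x k) * Ulu k)

/-- A follower's utility, with per-target covered/uncovered payoffs `Uc`, `Uu`
(the observation parameter is already substituted). -/
def Uf {K : ℕ} (Rl : ℝ) (Uc Uu : Fin K → ℝ) (x yi : Fin K → ℝ) : ℝ :=
  ∑ k, yi k * (x k * Uc k + (Rl - x k) * Uu k)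

/-- Best-response set of a follower with resource `Ri` against leader strategy `x`. -/
def BRi {K : ℕ} (Rl Ri : ℝ) (Uc Uu : Fin K → ℝ) (x : Fin K → ℝ) :
    Set (Fin K → ℝ) :=
  {yi | yi ∈ stratSet Ri ∧
    ∀ zi ∈ stratSet (K := K) Ri, Uf Rl Uc Uu x zi ≤ Uf Rl Uc Uu x yi}

/-- The auxiliary solution set SOL(y, θ′) (follower utilities already evaluated at θ′):
pairs (y′, λ) with y′ ∈ Ω_f, λ > 0,
Σᵢ (y′)ᵢᵏ (Uᵢᵘ − Uᵢᶜ)/(U_lᶜ − U_lᵘ) = λ Σᵢ yᵢᵏ for all k, and (y′)ᵢᵏ = 0 whenever yᵢᵏ = 0. -/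
def SOL {n K : ℕ} (R : Fin n → ℝ) (Ulc Ulu : Fin K → ℝ)
    (Uc Uu : Fin n → Fin K → ℝ) (y : Fin n → Fin K → ℝ) :
    Set ((Fin n → Fin K → ℝ) × ℝ) :=
  {p | (∀ i, p.1 i ∈ stratSet (R i)) ∧ 0 < p.2 ∧
    (∀ k, ∑ i, p.1 i k * ((Uu i k - Uc i k) / (Ulc k - Ulu k)) = p.2 * ∑ i, y i k) ∧
    (∀ i k, y i k = 0 → p.1 i k = 0)}

/-- gᵢ(x,θ,k), with θ already substituted into `Uc`, `Uu`. -/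
def gfun {K : ℕ} (Rl : ℝ) (Uc Uu : Fin K → ℝ) (x : Fin K → ℝ) (k : Fin K) : ℝ :=
  x k * Uc k + (Rl - x k) * Uu k

/-- The argmax target set Γ¹ᵢ(x,θ). -/
def Γ1 {K : ℕ} (Rl : ℝ) (Uc Uu : Fin K → ℝ) (x : Fin K → ℝ) : Set (Fin K) :=
  {k | ∀ l, gfun Rl Uc Uu x l ≤ gfun Rl Uc Uu x k}

theorem aux_isCompact_stratSet {K : ℕ} (r : ℝ) : IsCompact (stratSet (K := K) r) := by
  have hsub : stratSet (K := K) r ⊆ Set.Icc (fun _ => 0) (fun _ => r) := by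
    rintro x ⟨hs, h0⟩
    refine ⟨fun k => h0 k, fun k => ?_⟩
    show x k ≤ r
    rw [← hs]
    exact Finset.single_le_sum (fun j _ => h0 j) (Finset.mem_univ k)
  refine isCompact_Icc.of_isClosed_subset ?_ hsub
  unfold stratSet
  rw [Set.setOf_and, Set.setOf_forall]
  refine IsClosed.inter (isClosed_eq (by fun_prop) (by fun_prop)) ?_
  exact isClosed_iInter fun k => isClosed_le (by fun_prop) (by fun_prop)

theorem aux_stratSet_nonempty {K : ℕ} (hK : 1 ≤ K) (r : ℝ) (hr : 0 < r) :
    (stratSet (K := K) r).Nonempty := by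
  refine ⟨Pi.single ⟨0, hK⟩ r, by simp, fun k => ?_⟩
  by_cases h : k = ⟨0, hK⟩
  · subst h; simp [hr.le]
  · simp [h]

/-- for every observation θ′, the game with misperception 𝓗²(θ′) admits a
Misperception Strong Stackelberg Equilibrium. -/
theorem exists_MSSE
    (n K m : ℕ) (hn : 1 ≤ n) (hK : 1 ≤ K)
    (Rl : ℝ) (hRl : 0 < Rl) (R : Fin n → ℝ) (hR : ∀ i, 0 < R i)
    (Ulc Ulu : Fin K → ℝ)
    (Uic Uiu : Fin n → EuclideanSpace ℝ (Fin m) → Fin K → ℝ) :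
    ∀ θ' : EuclideanSpace ℝ (Fin m),
      ∃ x ∈ stratSet (K := K) Rl, ∃ y : Fin n → Fin K → ℝ,
        (∀ i, y i ∈ BRi Rl (R i) (Uic i θ') (Uiu i θ') x) ∧
        (∀ x' ∈ stratSet (K := K) Rl, ∀ y' : Fin n → Fin K → ℝ,
          (∀ i, y' i ∈ BRi Rl (R i) (Uic i θ') (Uiu i θ') x') →
          Ul Rl Ulc Ulu x' y' ≤ Ul Rl Ulc Ulu x y) := by
  intro θ'
  let S : Set ((Fin K → ℝ) × (Fin n → Fin K → ℝ)) :=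
    {p | p.1 ∈ stratSet (K := K) Rl ∧
      ∀ i, p.2 i ∈ BRi Rl (R i) (Uic i θ') (Uiu i θ') p.1}
  have hcomp : IsCompact ((stratSet (K := K) Rl) ×ˢ
      (Set.univ.pi fun i : Fin n => stratSet (K := K) (R i))) :=
    (aux_isCompact_stratSet Rl).prod
      (isCompact_univ_pi fun i => aux_isCompact_stratSet (R i))
  have hclosed : IsClosed S := by
    have hS : S = {p | p.1 ∈ stratSet (K := K) Rl} ∩
        ⋂ i, ({p | p.2 i ∈ stratSet (K := K) (R i)} ∩
          ⋂ z ∈ stratSet (K := K) (R i),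
            {p | Uf Rl (Uic i θ') (Uiu i θ') p.1 z ≤
              Uf Rl (Uic i θ') (Uiu i θ') p.1 (p.2 i)}) := by
      ext p
      simp [S, BRi]
    rw [hS]
    refine IsClosed.inter ((aux_isCompact_stratSet Rl).isClosed.preimage continuous_fst) ?_
    refine isClosed_iInter fun i => IsClosed.inter ?_ ?_
    · exact (aux_isCompact_stratSet (R i)).isClosed.preimage
        (f := fun p : (Fin K → ℝ) × (Fin n → Fin K → ℝ) => p.2 i) (by fun_prop)
    · refine isClosed_biInter fun z _ => ?_
      unfold Uf
      exact isClosed_le (by fun_prop) (by fun_prop)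
  have hScomp : IsCompact S :=
    hcomp.of_isClosed_subset hclosed fun p hp => ⟨hp.1, fun i _ => (hp.2 i).1⟩
  have hne : S.Nonempty := by
    obtain ⟨x, hx⟩ := aux_stratSet_nonempty hK Rl hRl
    have hbr : ∀ i, ∃ y, y ∈ BRi Rl (R i) (Uic i θ') (Uiu i θ') x := by
      intro i
      have hc : Continuous fun y => Uf Rl (Uic i θ') (Uiu i θ') x y := by
        unfold Uf
        fun_prop
      obtain ⟨y, hy, hmax⟩ := (aux_isCompact_stratSet (K := K) (R i)).exists_isMaxOn
        (aux_stratSet_nonempty hK (R i) (hR i)) hc.continuousOn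
      exact ⟨y, hy, fun z hz => hmax hz⟩
    choose y hy using hbr
    exact ⟨(x, y), hx, hy⟩
  have hcU : Continuous fun p : (Fin K → ℝ) × (Fin n → Fin K → ℝ) =>
      Ul Rl Ulc Ulu p.1 p.2 := by
    unfold Ul
    fun_prop
  obtain ⟨p, hp, hmax⟩ := hScomp.exists_isMaxOn hne hcU.continuousOn
  exact ⟨p.1, hp.1, p.2, hp.2, fun x' hx' y' hy' => hmax (a := (x', y')) ⟨hx', hy'⟩⟩
end
end

section
/- Suppose Θ ⊆ ℝ^m is compact and convex with nonempty interior and θ_0 ∈ int(Θ); for every i,k the maps θ ↦ U_i^c(θ,t_k), θ ↦ U_i^u(θ,t_k) are differentiable on Θ; U_l^c(t_k) > U_l^u(t_k) for all k; and U_i^c(θ',t_k) < U_i^u(θ',t_k) for all θ' ∈ Θ, i, k. Let (x_S, y_S) be a Strong Stackelberg Equilibrium with true parameter θ_0 such that for each follower i the argmax set Γ_i^1(x_S,θ_0) of targets is a strict maximizer set (g_i(x_S,θ_0,k) > g_i(x_S,θ_0,l) for k ∈ Γ_i^1, l ∉ Γ_i^1). Then there exists a convex subset δ_θ ⊆ Θ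 with nonempty interior such that for every θ' ∈ δ_θ, every follower i, and every y'_i ∈ argmax_{y_i ∈ Ω_i} U_i(x_S, y_i, θ'), one has U_i(x_S, y'_i, θ_0) = U_i(x_S, (y_S)_i, θ_0). -/
open scoped BigOperators

noncomputable section

theorem BRi_support {K : ℕ} (Rl Ri : ℝ) (hRi : 0 < Ri) (Uc Uu x y : Fin K → ℝ)
    (hy : y ∈ BRi Rl Ri Uc Uu x) (l : Fin K) (hl : y l ≠ 0) : l ∈ Γ1 Rl Uc Uu x := by
  obtain ⟨⟨hsum, hnn⟩, hbest⟩ := hy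
  obtain ⟨k0, -, hk0⟩ := Finset.exists_max_image Finset.univ (gfun Rl Uc Uu x) ⟨l, Finset.mem_univ l⟩
  have h1 := hbest (fun k => if k = k0 then Ri else 0) ⟨by simp, fun k => by
    dsimp only
    split_ifs
    · exact hRi.le
    · exact le_refl 0⟩
  have h2 : Uf Rl Uc Uu x (fun k => if k = k0 then Ri else 0) = Ri * gfun Rl Uc Uu x k0 := by
    simp [Uf, gfun]
  have h3 : Uf Rl Uc Uu x y = ∑ k, y k * gfun Rl Uc Uu x k := rfl
  rw [h2, h3] at h1
  have hnn' : ∀ k ∈ Finset.univ, 0 ≤ y k * (gfun Rl Uc Uu x k0 - gfun Rl Uc Uu x k) :=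
    fun k hk => mul_nonneg (hnn k) (sub_nonneg.2 (hk0 k hk))
  have h4 : ∑ k, y k * (gfun Rl Uc Uu x k0 - gfun Rl Uc Uu x k) = 0 := by
    apply le_antisymm _ (Finset.sum_nonneg hnn')
    simp only [mul_sub, Finset.sum_sub_distrib, ← Finset.sum_mul, hsum]
    linarith
  have h5 := (Finset.sum_eq_zero_iff_of_nonneg hnn').1 h4 l (Finset.mem_univ l)
  have h6 : gfun Rl Uc Uu x k0 - gfun Rl Uc Uu x l = 0 := (mul_eq_zero.1 h5).resolve_left hl
  intro k
  have := hk0 k (Finset.mem_univ k)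
  linarith

theorem Uf_of_support {K : ℕ} (Rl Ri : ℝ) (Uc Uu x y : Fin K → ℝ)
    (hy : y ∈ stratSet (K := K) Ri) (k0 : Fin K) (hk0 : k0 ∈ Γ1 Rl Uc Uu x)
    (hs : ∀ l, y l ≠ 0 → l ∈ Γ1 Rl Uc Uu x) :
    Uf Rl Uc Uu x y = Ri * gfun Rl Uc Uu x k0 := by
  rw [← hy.1, Finset.sum_mul]
  refine Finset.sum_congr rfl fun l _ => ?_
  by_cases h : y l = 0
  · simp [h]
  · have : gfun Rl Uc Uu x l = gfun Rl Uc Uu x k0 := le_antisymm (hk0 l) (hs l h k0)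
    rw [← this, gfun]

/-- Theorem 4, part 1: existence of a convex robustness set with nonempty
interior on which the followers' realized utilities at the SSE are unchanged. -/
theorem robust_MSSE_exists_region
    (n K m : ℕ) (hn : 1 ≤ n) (hK : 1 ≤ K)
    (Rl : ℝ) (hRl : 0 < Rl) (R : Fin n → ℝ) (hR : ∀ i, 0 < R i)
    (Ulc Ulu : Fin K → ℝ)
    (Uic Uiu : Fin n → EuclideanSpace ℝ (Fin m) → Fin K → ℝ)
    (θ0 : EuclideanSpace ℝ (Fin m))
    (Θ : Set (EuclideanSpace ℝ (Fin m)))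
    (hΘc : IsCompact Θ) (hΘconv : Convex ℝ Θ)
    (hΘint : (interior Θ).Nonempty) (hθ0 : θ0 ∈ interior Θ)
    (hdc : ∀ i k, DifferentiableOn ℝ (fun θ => Uic i θ k) Θ)
    (hdu : ∀ i k, DifferentiableOn ℝ (fun θ => Uiu i θ k) Θ)
    (hA1 : ∀ k, Ulu k < Ulc k)
    (hA3 : ∀ θ' ∈ Θ, ∀ i k, Uic i θ' k < Uiu i θ' k)
    (xS : Fin K → ℝ) (yS : Fin n → Fin K → ℝ)
    (hxS : xS ∈ stratSet (K := K) Rl)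
    (hyS : ∀ i, yS i ∈ BRi Rl (R i) (Uic i θ0) (Uiu i θ0) xS)
    (hmax : ∀ x ∈ stratSet (K := K) Rl, ∀ y : Fin n → Fin K → ℝ,
      (∀ i, y i ∈ BRi Rl (R i) (Uic i θ0) (Uiu i θ0) x) →
      Ul Rl Ulc Ulu x y ≤ Ul Rl Ulc Ulu xS yS)
    (hstrict : ∀ i, ∀ k ∈ Γ1 Rl (Uic i θ0) (Uiu i θ0) xS,
      ∀ l, l ∉ Γ1 Rl (Uic i θ0) (Uiu i θ0) xS →
        gfun Rl (Uic i θ0) (Uiu i θ0) xS l < gfun Rl (Uic i θ0) (Uiu i θ0) xS k) :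
    ∃ δ : Set (EuclideanSpace ℝ (Fin m)), δ ⊆ Θ ∧ Convex ℝ δ ∧
      (interior δ).Nonempty ∧
      ∀ θ' ∈ δ, ∀ i, ∀ y' ∈ BRi Rl (R i) (Uic i θ') (Uiu i θ') xS,
        Uf Rl (Uic i θ0) (Uiu i θ0) xS y' = Uf Rl (Uic i θ0) (Uiu i θ0) xS (yS i) := by
  haveI : Nonempty (Fin K) := ⟨⟨0, hK⟩⟩
  have hex : ∀ i, ∃ k, k ∈ Γ1 Rl (Uic i θ0) (Uiu i θ0) xS := fun i => by
    obtain ⟨k, -, hk⟩ := Finset.exists_max_image Finset.univ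
      (gfun Rl (Uic i θ0) (Uiu i θ0) xS) Finset.univ_nonempty
    exact ⟨k, fun l => hk l (Finset.mem_univ l)⟩
  choose k0 hk0 using hex
  have hnhds : Θ ∈ nhds θ0 := mem_interior_iff_mem_nhds.1 hθ0
  have hcont : ∀ i l, ContinuousAt (fun θ => gfun Rl (Uic i θ) (Uiu i θ) xS l) θ0 := by
    intro i l
    have h1 := ((hdc i l).differentiableAt hnhds).continuousAt
    have h2 := ((hdu i l).differentiableAt hnhds).continuousAt
    exact (h1.const_mul (xS l)).add (h2.const_mul (Rl - xS l))
  have hev : ∀ᶠ θ in nhds θ0, ∀ i l, l ∉ Γ1 Rl (Uic i θ0) (Uiu i θ0) xS →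
      gfun Rl (Uic i θ) (Uiu i θ) xS l < gfun Rl (Uic i θ) (Uiu i θ) xS (k0 i) := by
    rw [Filter.eventually_all]
    intro i
    rw [Filter.eventually_all]
    intro l
    by_cases hl : l ∈ Γ1 Rl (Uic i θ0) (Uiu i θ0) xS
    · exact Filter.Eventually.of_forall fun θ h => absurd hl h
    · exact ((hcont i l).eventually_lt (hcont i (k0 i)) (hstrict i _ (hk0 i) l hl)).mono
        fun θ h _ => h
  obtain ⟨ε, hε, hball⟩ := Metric.mem_nhds_iff.1 (Filter.inter_mem hnhds hev)
  refine ⟨Metric.ball θ0 ε, fun θ h => (hball h).1, convex_ball _ _, ?_, ?_⟩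
  · rw [Metric.isOpen_ball.interior_eq]
    exact ⟨θ0, Metric.mem_ball_self hε⟩
  · intro θ' hθ' i y' hy'
    rw [Uf_of_support Rl (R i) _ _ xS (yS i) (hyS i).1 (k0 i) (hk0 i)
      (BRi_support Rl (R i) (hR i) _ _ xS _ (hyS i))]
    refine Uf_of_support Rl (R i) _ _ xS y' hy'.1 (k0 i) (hk0 i) fun l hl => ?_
    by_contra hcon
    have h1 := BRi_support Rl (R i) (hR i) _ _ xS _ hy' l hl (k0 i)
    exact absurd h1 (not_le.2 ((hball hθ').2 i l hcon))
end
end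

section
/- Suppose U_l^c(t_k) > U_l^u(t_k) for every target k. Let y ∈ Ω_f, θ' ∈ ℝ^m, and (y', λ) ∈ SOL(y, θ'). Then for all x, x' ∈ Ω_l, U_l(x, y) − U_l(x', y) = (1/λ) · (Σ_{i=1}^n U_i(x', y'_i, θ') − Σ_{i=1}^n U_i(x, y'_i, θ')). In particular, U_l(x, y) > U_l(x', y) if and only if Σ_{i=1}^n U_i(x, y'_i, θ') < Σ_{i=1}^n U_i(x', y'_i, θ'), and U_l(x, y) = U_l(x', y) if and only if Σ_{i=1}^n U_i(x, y'_i, θ') = Σ_{i=1}^n U_i(x', y'_i, θ'). -/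
open scoped BigOperators

noncomputable section

/-- Step 1 of Theorem 2: the key identity relating the leader's utility
differences to the followers' aggregate utility differences through SOL(y, θ′). -/
theorem leader_follower_utility_identity
    (n K m : ℕ) (hn : 1 ≤ n) (hK : 1 ≤ K)
    (Rl : ℝ) (hRl : 0 < Rl) (R : Fin n → ℝ) (hR : ∀ i, 0 < R i)
    (Ulc Ulu : Fin K → ℝ)
    (Uic Uiu : Fin n → EuclideanSpace ℝ (Fin m) → Fin K → ℝ)
    (θ' : EuclideanSpace ℝ (Fin m))
    (hA1 : ∀ k, Ulu k < Ulc k)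
    (y : Fin n → Fin K → ℝ) (hy : ∀ i, y i ∈ stratSet (K := K) (R i))
    (y' : Fin n → Fin K → ℝ) (lam : ℝ)
    (hSOL : (y', lam) ∈ SOL R Ulc Ulu (fun i => Uic i θ') (fun i => Uiu i θ') y) :
    ∀ x ∈ stratSet (K := K) Rl, ∀ x' ∈ stratSet (K := K) Rl,
      (Ul Rl Ulc Ulu x y - Ul Rl Ulc Ulu x' y =
        (1 / lam) * ((∑ i, Uf Rl (Uic i θ') (Uiu i θ') x' (y' i)) -
          (∑ i, Uf Rl (Uic i θ') (Uiu i θ') x (y' i)))) ∧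
      (Ul Rl Ulc Ulu x' y < Ul Rl Ulc Ulu x y ↔
        (∑ i, Uf Rl (Uic i θ') (Uiu i θ') x (y' i)) <
          (∑ i, Uf Rl (Uic i θ') (Uiu i θ') x' (y' i))) ∧
      (Ul Rl Ulc Ulu x y = Ul Rl Ulc Ulu x' y ↔
        (∑ i, Uf Rl (Uic i θ') (Uiu i θ') x (y' i)) =
          (∑ i, Uf Rl (Uic i θ') (Uiu i θ') x' (y' i))) := by
  intro x _ x' _
  obtain ⟨-, hlam, hk, -⟩ := hSOL
  simp only at hlam hk
  have key : lam * (Ul Rl Ulc Ulu x y - Ul Rl Ulc Ulu x' y) =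
      (∑ i, Uf Rl (Uic i θ') (Uiu i θ') x' (y' i)) -
          (∑ i, Uf Rl (Uic i θ') (Uiu i θ') x (y' i)) := by
    unfold Ul Uf
    rw [← Finset.sum_sub_distrib, ← Finset.sum_sub_distrib, Finset.mul_sum]
    simp only [← Finset.sum_sub_distrib]
    rw [Finset.sum_comm]
    refine Finset.sum_congr rfl fun k _ => ?_
    have hd : Ulc k - Ulu k ≠ 0 := (sub_pos.mpr (hA1 k)).ne'
    calc lam * ((∑ i, y i k) * (x k * Ulc k + (Rl - x k) * Ulu k) -
            (∑ i, y i k) * (x' k * Ulc k + (Rl - x' k) * Ulu k))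
        = (lam * ∑ i, y i k) * ((x k - x' k) * (Ulc k - Ulu k)) := by ring
      _ = _ := by
        rw [← hk k, Finset.sum_mul]
        refine Finset.sum_congr rfl fun i _ => ?_
        field_simp
        ring
  refine ⟨?_, ?_, ?_⟩
  · rw [← key]
    field_simp
  · rw [← sub_pos, ← sub_pos (b := ∑ i, Uf Rl (Uic i θ') (Uiu i θ') x (y' i)), ← key]
    exact (mul_pos_iff_of_pos_left hlam).symm
  · rw [← sub_eq_zero, eq_comm (a := ∑ i, Uf Rl (Uic i θ') (Uiu i θ') x (y' i)),
      ← sub_eq_zero (b := ∑ i, Uf Rl (Uic i θ') (Uiu i θ') x (y' i)), ← key]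
    simp [hlam.ne']
end
end

section
/- In the single-leader-single-follower case n = 1, suppose U_l^c(t_k) > U_l^u(t_k) and U_1^c(θ',t_k) < U_1^u(θ',t_k) for every target k, where θ' ∈ ℝ^m. Then for every y ∈ Ω_1 the set SOL(y, θ') is nonempty; explicitly, taking λ = R_1 / Σ_{k=1}^K y^k (U_l^c(t_k) − U_l^u(t_k))/(U_1^u(θ',t_k) − U_1^c(θ',t_k)) and (y')^k = λ y^k (U_l^c(t_k) − U_l^u(t_k))/(U_1^u(θ',t_k) − U_1^c(θ',t_k)) gives (y', λ) ∈ SOL(y, θ'). -/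
open scoped BigOperators

noncomputable section

/-- in the single-follower case, SOL(y, θ′) is nonempty, with the explicit
witness (y′, λ). -/
theorem SOL_nonempty_single_follower
    (K m : ℕ) (hK : 1 ≤ K)
    (Rl : ℝ) (hRl : 0 < Rl) (R : Fin 1 → ℝ) (hR : ∀ i, 0 < R i)
    (Ulc Ulu : Fin K → ℝ)
    (Uic Uiu : Fin 1 → EuclideanSpace ℝ (Fin m) → Fin K → ℝ)
    (θ' : EuclideanSpace ℝ (Fin m))
    (hA1 : ∀ k, Ulu k < Ulc k)
    (hA3 : ∀ k, Uic 0 θ' k < Uiu 0 θ' k)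
    (y : Fin K → ℝ) (hy : y ∈ stratSet (K := K) (R 0)) :
    ((fun (_ : Fin 1) k =>
        (R 0 / ∑ j, y j * ((Ulc j - Ulu j) / (Uiu 0 θ' j - Uic 0 θ' j))) *
          y k * ((Ulc k - Ulu k) / (Uiu 0 θ' k - Uic 0 θ' k)),
      R 0 / ∑ j, y j * ((Ulc j - Ulu j) / (Uiu 0 θ' j - Uic 0 θ' j)))
        ∈ SOL R Ulc Ulu (fun i => Uic i θ') (fun i => Uiu i θ') (fun _ => y)) ∧
    (SOL R Ulc Ulu (fun i => Uic i θ') (fun i => Uiu i θ') (fun _ => y)).Nonempty := by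
  obtain ⟨hsum, hnn⟩ := hy
  have hc : ∀ k, 0 < (Ulc k - Ulu k) / (Uiu 0 θ' k - Uic 0 θ' k) := fun k =>
    div_pos (sub_pos.2 (hA1 k)) (sub_pos.2 (hA3 k))
  have hS : 0 < ∑ j, y j * ((Ulc j - Ulu j) / (Uiu 0 θ' j - Uic 0 θ' j)) := by
    have hpos : 0 < ∑ k, y k := by rw [hsum]; exact hR 0
    obtain ⟨k, hk, hk0⟩ := Finset.exists_ne_zero_of_sum_ne_zero hpos.ne'
    exact Finset.sum_pos' (fun j _ => mul_nonneg (hnn j) (hc j).le)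
      ⟨k, hk, mul_pos (lt_of_le_of_ne (hnn k) (Ne.symm hk0)) (hc k)⟩
  have hL := div_pos (hR 0) hS
  refine (fun h => ⟨h, ⟨_, h⟩⟩) ?_
  refine ⟨fun i => ⟨?_, fun k => ?_⟩, hL, fun k => ?_, fun i k h => ?_⟩
  · rw [Subsingleton.elim i 0]
    simp only [mul_assoc]
    rw [← Finset.mul_sum, div_mul_cancel₀ _ hS.ne']
  · exact mul_nonneg (mul_nonneg hL.le (hnn k)) (hc k).le
  · have h1 := (sub_pos.2 (hA1 k)).ne'
    have h2 := (sub_pos.2 (hA3 k)).ne'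
    simp only [Fin.sum_univ_one]
    rw [mul_assoc, div_mul_div_cancel₀ h2, div_self h1, mul_one]
  · have h' : y k = 0 := h
    simp [h']
end
end

section
/- Suppose U_l^c(t_k) > U_l^u(t_k) for every target k and U_i^c(θ',t_k) < U_i^u(θ',t_k) for every follower i and target k, where θ' ∈ ℝ^m. Let y ∈ Ω_f be a follower strategy profile in which all followers attack the same target: there exists a target k' with y_i^{k'} = R_i for every i. Then SOL(y, θ') is nonempty; explicitly, taking λ = (Σ_{i=1}^n R_i (U_i^u(θ',t_{k'}) − U_i^c(θ',t_{k'}))/(U_l^c(t_{k'}) − U_l^u(t_{k'}))) / (Σ_{i=1}^n R_i) and y' = y gives (y', λ) ∈ SOL(y, θ'). -/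
open scoped BigOperators

noncomputable section

/-- if all followers attack the same target k′, then SOL(y, θ′) is nonempty,
with the explicit witness (y, λ). -/
theorem SOL_nonempty_same_target
    (n K m : ℕ) (hn : 1 ≤ n) (hK : 1 ≤ K)
    (Rl : ℝ) (hRl : 0 < Rl) (R : Fin n → ℝ) (hR : ∀ i, 0 < R i)
    (Ulc Ulu : Fin K → ℝ)
    (Uic Uiu : Fin n → EuclideanSpace ℝ (Fin m) → Fin K → ℝ)
    (θ' : EuclideanSpace ℝ (Fin m))
    (hA1 : ∀ k, Ulu k < Ulc k)
    (hA3 : ∀ i k, Uic i θ' k < Uiu i θ' k)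
    (y : Fin n → Fin K → ℝ) (hy : ∀ i, y i ∈ stratSet (K := K) (R i))
    (k' : Fin K) (hsame : ∀ i, y i k' = R i) :
    ((y, (∑ i, R i * ((Uiu i θ' k' - Uic i θ' k') / (Ulc k' - Ulu k'))) / (∑ i, R i))
        ∈ SOL R Ulc Ulu (fun i => Uic i θ') (fun i => Uiu i θ') y) ∧
    (SOL R Ulc Ulu (fun i => Uic i θ') (fun i => Uiu i θ') y).Nonempty := by
  have hne : (Finset.univ : Finset (Fin n)).Nonempty := ⟨⟨0, hn⟩, Finset.mem_univ _⟩
  have hRs : 0 < ∑ i, R i := Finset.sum_pos (fun i _ => hR i) hne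
  have hzero : ∀ i k, k ≠ k' → y i k = 0 := by
    intro i k hk
    obtain ⟨hs, hnn⟩ := hy i
    have h1 := Finset.add_sum_erase Finset.univ (fun k => y i k) (Finset.mem_univ k')
    have h2 : ∑ k ∈ Finset.univ.erase k', y i k = 0 := by
      have h3 := hsame i
      linarith
    exact (Finset.sum_eq_zero_iff_of_nonneg (fun j _ => hnn j)).1 h2 k
      (Finset.mem_erase.2 ⟨hk, Finset.mem_univ _⟩)
  have key : (y, (∑ i, R i * ((Uiu i θ' k' - Uic i θ' k') / (Ulc k' - Ulu k'))) / (∑ i, R i))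
        ∈ SOL R Ulc Ulu (fun i => Uic i θ') (fun i => Uiu i θ') y := by
    refine ⟨hy, ?_, ?_, fun i k h => h⟩
    · exact div_pos (Finset.sum_pos (fun i _ => mul_pos (hR i)
        (div_pos (sub_pos.2 (hA3 i k')) (sub_pos.2 (hA1 k')))) hne) hRs
    · intro k
      by_cases hk : k = k'
      · subst hk
        simp only [hsame]
        rw [div_mul_cancel₀ _ hRs.ne']
      · simp [hzero _ k hk]
  exact ⟨key, _, key⟩
end
end
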